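/- arXiv:1612.06212 — 2 statements merged into one kernel-verified Lean document; each statement's English description precedes it below -/
import Mathlib

section
/- Let T, k be natural numbers with k > 0, and let h, θ, η, w : ℕ → ℝ be real sequences satisfying, for every t with T < t ≤ T + k, the CFN component recurrence h(t) = θ(t) · tanh(h(t−1)) + η(t) · tanh(w(t)). Set Θ = max_{T ≤ t ≤ T+k} θ(t) and H = max_{T ≤ t ≤ T+k} η(t), and assume 0 ≤ θ(t) and 0 ≤ η(t) on this interval and Θ < 1. Then |h(T+k)| ≤ Θ^k · |h(T)| + (H / (1 − Θ)) · max_{T ≤ t ≤ T+k} |w(t)|. -/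
/-!
Since `tanh` is `1`-Lipschitz and vanishes at `0`, each step of the recurrence gives
`|h t| ≤ Θ * |h (t - 1)| + H * max |w|`. Iterating this affine inequality `k` times leaves
`Θ ^ k * |h T|` plus `H * max |w|` times a partial sum of the geometric series of ratio `Θ`,
which is at most `1 / (1 - Θ)`.
-/

lemma hasDerivAt_tanh (x : ℝ) : HasDerivAt Real.tanh (1 / Real.cosh x ^ 2) x := by
  have hquot := (Real.hasDerivAt_sinh x).div (Real.hasDerivAt_cosh x) (Real.cosh_pos x).ne'
  rw [← sq, ← sq, Real.cosh_sq_sub_sinh_sq] at hquot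
  exact hquot.congr_of_eventuallyEq (.of_forall Real.tanh_eq_sinh_div_cosh)

lemma lipschitzWith_tanh : LipschitzWith 1 Real.tanh := by
  refine lipschitzWith_of_nnnorm_deriv_le (fun x => (hasDerivAt_tanh x).differentiableAt)
    fun x => ?_
  have hcosh : 1 ≤ Real.cosh x ^ 2 := one_le_pow₀ (Real.one_le_cosh x)
  rw [(hasDerivAt_tanh x).deriv, ← NNReal.coe_le_coe, coe_nnnorm, NNReal.coe_one,
    Real.norm_of_nonneg (by positivity)]
  exact div_le_one_of_le₀ hcosh (by positivity)

lemma abs_tanh_le_abs (x : ℝ) : |Real.tanh x| ≤ |x| := by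
  simpa using lipschitzWith_tanh.norm_sub_le x 0

lemma le_pow_mul_add_geom_sum_mul {R : Type*} [Semiring R] [PartialOrder R] [IsOrderedRing R]
    {u : ℕ → R} {a b : R} (ha : 0 ≤ a) (n : ℕ) (hu : ∀ j < n, u (j + 1) ≤ a * u j + b) :
    u n ≤ a ^ n * u 0 + (∑ i ∈ Finset.range n, a ^ i) * b := by
  induction n with
  | zero => simp
  | succ n ih =>
    calc u (n + 1) ≤ a * u n + b := hu n n.lt_succ_self
      _ ≤ a * (a ^ n * u 0 + (∑ i ∈ Finset.range n, a ^ i) * b) + b := by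
        gcongr
        exact ih fun j hj => hu j (hj.trans n.lt_succ_self)
      _ = a ^ (n + 1) * u 0 + (∑ i ∈ Finset.range (n + 1), a ^ i) * b := by
        rw [geom_sum_succ, pow_succ']
        noncomm_ring

lemma le_pow_mul_add_div_one_sub {K : Type*} [Field K] [LinearOrder K] [IsStrictOrderedRing K]
    {u : ℕ → K} {a b : K} (ha₀ : 0 ≤ a) (ha₁ : a < 1) (hb : 0 ≤ b) (n : ℕ)
    (hu : ∀ j < n, u (j + 1) ≤ a * u j + b) :
    u n ≤ a ^ n * u 0 + b / (1 - a) := by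
  have hgeom : ∑ i ∈ Finset.range n, a ^ i ≤ 1 / (1 - a) := by
    simpa using geom_sum_Ico_le_of_lt_one (m := 0) (n := n) ha₀ ha₁
  calc u n ≤ a ^ n * u 0 + (∑ i ∈ Finset.range n, a ^ i) * b := le_pow_mul_add_geom_sum_mul ha₀ n hu
    _ ≤ a ^ n * u 0 + 1 / (1 - a) * b := by gcongr
    _ = a ^ n * u 0 + b / (1 - a) := by rw [one_div_mul_eq_div]

section NormedSpace

open Finset

variable {E F : Type*} [SeminormedAddCommGroup E] [NormedSpace ℝ E] [SeminormedAddCommGroup F]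

lemma norm_smul_add_smul_le {a b A B X Y : ℝ} {x y : E} (ha : |a| ≤ A) (hb : |b| ≤ B)
    (hx : ‖x‖ ≤ X) (hy : ‖y‖ ≤ Y) : ‖a • x + b • y‖ ≤ A * X + B * Y :=
  calc ‖a • x + b • y‖ ≤ |a| * ‖x‖ + |b| * ‖y‖ := by
        simpa only [norm_smul, Real.norm_eq_abs] using norm_add_le (a • x) (b • y)
    _ ≤ A * X + B * Y := add_le_add
        (mul_le_mul ha hx (norm_nonneg x) ((abs_nonneg a).trans ha))
        (mul_le_mul hb hy (norm_nonneg y) ((abs_nonneg b).trans hb))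

theorem cfn_decay_estimate_general {φ : E → E} {ψ : F → E} (hφ : ∀ x, ‖φ x‖ ≤ ‖x‖)
    (hψ : ∀ y, ‖ψ y‖ ≤ ‖y‖) (T k : ℕ) (h : ℕ → E) (θ η : ℕ → ℝ) (w : ℕ → F)
    (hrec : ∀ t, T < t → t ≤ T + k → h t = θ t • φ (h (t - 1)) + η t • ψ (w t))
    (hθ0 : ∀ t, T ≤ t → t ≤ T + k → 0 ≤ θ t)
    (hη0 : ∀ t, T ≤ t → t ≤ T + k → 0 ≤ η t)
    (Θ H : ℝ)
    (hΘ : Θ = (Icc T (T + k)).sup' (nonempty_Icc.mpr (Nat.le_add_right T k)) θ)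
    (hH : H = (Icc T (T + k)).sup' (nonempty_Icc.mpr (Nat.le_add_right T k)) η)
    (hΘ1 : Θ < 1) :
    ‖h (T + k)‖ ≤ Θ ^ k * ‖h T‖ + H / (1 - Θ) *
      (Icc T (T + k)).sup' (nonempty_Icc.mpr (Nat.le_add_right T k)) (fun t => ‖w t‖) := by
  set M := (Icc T (T + k)).sup' (nonempty_Icc.mpr (Nat.le_add_right T k)) (fun t => ‖w t‖)
  have hT : T ∈ Icc T (T + k) := left_mem_Icc.mpr (Nat.le_add_right T k)
  have abs_θ_le : ∀ t ∈ Icc T (T + k), |θ t| ≤ Θ := fun t ht => by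
    rw [abs_of_nonneg (hθ0 t (mem_Icc.mp ht).1 (mem_Icc.mp ht).2), hΘ]
    exact le_sup' θ ht
  have abs_η_le : ∀ t ∈ Icc T (T + k), |η t| ≤ H := fun t ht => by
    rw [abs_of_nonneg (hη0 t (mem_Icc.mp ht).1 (mem_Icc.mp ht).2), hH]
    exact le_sup' η ht
  have norm_w_le : ∀ t ∈ Icc T (T + k), ‖w t‖ ≤ M := fun t ht => le_sup' (fun t => ‖w t‖) ht
  have hΘ₀ : 0 ≤ Θ := (abs_nonneg _).trans (abs_θ_le T hT)
  have hHM : 0 ≤ H * M :=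
    mul_nonneg ((abs_nonneg _).trans (abs_η_le T hT)) ((norm_nonneg _).trans (norm_w_le T hT))
  have norm_step : ∀ j < k, ‖h (T + (j + 1))‖ ≤ Θ * ‖h (T + j)‖ + H * M := fun j hj => by
    have ht : T + (j + 1) ∈ Icc T (T + k) := mem_Icc.mpr ⟨by lia, by lia⟩
    rw [hrec (T + (j + 1)) (by lia) (mem_Icc.mp ht).2]
    exact norm_smul_add_smul_le (abs_θ_le _ ht) (abs_η_le _ ht) (hφ _)
      ((hψ _).trans (norm_w_le _ ht))
  rw [div_mul_eq_mul_div]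
  exact le_pow_mul_add_div_one_sub (u := fun j => ‖h (T + j)‖) hΘ₀ hΘ1 hHM k norm_step

end NormedSpace

/-- Lemma 1 of the paper (CFN decay estimate, componentwise form):
if `h t = θ t * tanh (h (t-1)) + η t * tanh (w t)` on `(T, T+k]`, the gates are
nonnegative on `[T, T+k]`, and the maximum forget-gate value `Θ` on this interval
satisfies `Θ < 1`, then
`|h (T+k)| ≤ Θ^k * |h T| + (H / (1 - Θ)) * max_{T ≤ t ≤ T+k} |w t|`,
where `H` is the maximum input-gate value on the interval. -/
theorem cfn_decay_estimate (T k : ℕ) (hk : 0 < k) (h θ η w : ℕ → ℝ)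
    (hrec : ∀ t, T < t → t ≤ T + k →
      h t = θ t * Real.tanh (h (t - 1)) + η t * Real.tanh (w t))
    (hθ0 : ∀ t, T ≤ t → t ≤ T + k → 0 ≤ θ t)
    (hη0 : ∀ t, T ≤ t → t ≤ T + k → 0 ≤ η t)
    (Θ H : ℝ)
    (hΘ : Θ = (Finset.Icc T (T + k)).sup'
      (Finset.nonempty_Icc.mpr (Nat.le_add_right T k)) θ)
    (hH : H = (Finset.Icc T (T + k)).sup'
      (Finset.nonempty_Icc.mpr (Nat.le_add_right T k)) η)
    (hΘ1 : Θ < 1) :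
    |h (T + k)| ≤ Θ ^ k * |h T| +
      (H / (1 - Θ)) * ((Finset.Icc T (T + k)).sup'
        (Finset.nonempty_Icc.mpr (Nat.le_add_right T k)) (fun t => |w t|)) :=
  cfn_decay_estimate_general abs_tanh_le_abs abs_tanh_le_abs T k h θ η w hrec hθ0 hη0 Θ H hΘ hH hΘ1
end

section
/- Consider an L-layer CFN with hidden states h^{(ℓ)}_t ∈ ℝ^{n_ℓ} for 1 ≤ ℓ ≤ L, evolving by h^{(1)}_t = θ^{(1)}_t ⊙ tanh(h^{(1)}_{t−1}) + η^{(1)}_t ⊙ tanh(W^{(1)} x_t) and, for 2 ≤ ℓ ≤ L, h^{(ℓ)}_t = θ^{(ℓ)}_t ⊙ tanh(h^{(ℓ)}_{t−1}) + η^{(ℓ)}_t ⊙ tanh(W^{(ℓ)} h^{(ℓ−1)}_t), where all gate values θ^{(j)}_t(i), η^{(j)}_t(i) lie in [0, Θ] for some fixed Θ with 0 < Θ < 1. If W^{(1)} x_t = 0 for all t > T, then for every layer 1 ≤ ℓ ≤ L the hidden state converges to zero: lim_{t → ∞} h^{(ℓ)}_t = 0. -/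
/-!
Since the forget gates are at most `1`, each layer carries over at most `tanh` of the modulus of
a hidden coordinate, and `tanh y < y` for `y > 0`. If the layer's input tends to zero, the upper
limit `l` of that modulus satisfies `l ≤ tanh l`, which forces `l = 0`. A layer thus turns a
vanishing input into a vanishing output, and continuity of the weight matrices passes it on to
the next layer.
-/

open Filter Topology

theorem strictMono_tanh : StrictMono Real.tanh := by
  intro x y hxy
  have hsinh : 0 < Real.sinh (y - x) := Real.sinh_pos_iff.2 (sub_pos.2 hxy)
  rw [Real.sinh_sub] at hsinh
  rw [Real.tanh_eq_sinh_div_cosh, Real.tanh_eq_sinh_div_cosh,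
    div_lt_div_iff₀ (Real.cosh_pos x) (Real.cosh_pos y)]
  linarith

theorem continuous_tanh : Continuous Real.tanh := by
  rw [funext Real.tanh_eq_sinh_div_cosh]
  exact Real.continuous_sinh.div Real.continuous_cosh fun x => (Real.cosh_pos x).ne'

theorem tanh_lt_self {x : ℝ} (hx : 0 < x) : Real.tanh x < x := by
  obtain ⟨c, ⟨hc, hcx⟩, hslope⟩ := exists_hasDerivAt_eq_slope Real.sinh Real.cosh hx
    Real.continuous_sinh.continuousOn fun y _ => Real.hasDerivAt_sinh y
  have hcosh : Real.cosh c < Real.cosh x := Real.cosh_strictMonoOn hc.le hx.le hcx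
  rw [Real.sinh_zero, sub_zero, sub_zero] at hslope
  rw [Real.tanh_eq_sinh_div_cosh, div_lt_comm₀ (Real.cosh_pos x) hx, ← hslope]
  exact hcosh

theorem abs_tanh (x : ℝ) : |Real.tanh x| = Real.tanh |x| := by
  rw [Real.tanh_eq_sinh_div_cosh, abs_div, Real.abs_sinh,
    abs_of_pos (Real.cosh_pos x), Real.tanh_eq_sinh_div_cosh, Real.cosh_abs]

theorem tendsto_zero_of_le_add_of_lt_self {φ : ℝ → ℝ} {a b : ℕ → ℝ} (hφ : Monotone φ)
    (hφc : Continuous φ) (hφlt : ∀ y, 0 < y → φ y < y) (ha : ∀ t, 0 ≤ a t)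
    (ha_bdd : IsBoundedUnder (· ≤ ·) atTop a) (hab : ∀ t, a (t + 1) ≤ φ (a t) + b t)
    (hb : Tendsto b atTop (𝓝 0)) : Tendsto a atTop (𝓝 0) := by
  have ha_bddBelow : IsBoundedUnder (· ≥ ·) atTop a := isBoundedUnder_of ⟨0, ha⟩
  have hφa_bdd : IsBoundedUnder (· ≤ ·) atTop (φ ∘ a) := hφ.isBoundedUnder_le_comp ha_bdd
  have hφa_bddBelow : IsBoundedUnder (· ≥ ·) atTop (φ ∘ a) :=
    hφ.isBoundedUnder_ge_comp ha_bddBelow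
  have hlimsup_le : limsup a atTop ≤ φ (limsup a atTop) := calc
    limsup a atTop = limsup (fun t => a (t + 1)) atTop := (limsup_nat_add a 1).symm
    _ ≤ limsup (φ ∘ a + b) atTop :=
      limsup_le_limsup (.of_forall hab)
        (isBoundedUnder_of ⟨0, fun t => ha (t + 1)⟩).isCoboundedUnder_le
        (isBoundedUnder_le_add hφa_bdd hb.isBoundedUnder_le)
    _ ≤ limsup (φ ∘ a) atTop + limsup b atTop :=
      limsup_add_le hφa_bddBelow hφa_bdd hb.isCoboundedUnder_le hb.isBoundedUnder_le
    _ = φ (limsup a atTop) := by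
      rw [hb.limsup_eq, add_zero, hφ.map_limsup_of_continuousAt a hφc.continuousAt ha_bdd
        ha_bddBelow.isCoboundedUnder_le]
  have hlimsup_nonpos : limsup a atTop ≤ 0 :=
    not_lt.1 fun hpos => (hφlt _ hpos).not_ge hlimsup_le
  exact tendsto_of_le_liminf_of_limsup_le
    (le_liminf_of_le ha_bdd.isCoboundedUnder_ge (.of_forall ha)) hlimsup_nonpos
    ha_bdd ha_bddBelow

theorem tendsto_zero_of_eq_mul_tanh_add {a θ b : ℕ → ℝ} (hθ : ∀ t, |θ t| ≤ 1)
    (ha : ∀ t, a (t + 1) = θ t * Real.tanh (a t) + b t) (hb : Tendsto b atTop (𝓝 0)) :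
    Tendsto a atTop (𝓝 0) := by
  have habs_le : ∀ t, |a (t + 1)| ≤ Real.tanh |a t| + |b t| := fun t => calc
    |a (t + 1)| ≤ |θ t| * |Real.tanh (a t)| + |b t| := by
      rw [ha, ← abs_mul]
      exact abs_add_le _ _
    _ ≤ Real.tanh |a t| + |b t| := by
      rw [← abs_tanh]
      gcongr
      exact mul_le_of_le_one_left (abs_nonneg _) (hθ t)
  have hb_abs : Tendsto (fun t => |b t|) atTop (𝓝 0) := by simpa only [abs_zero] using hb.abs
  have ha_bdd : IsBoundedUnder (· ≤ ·) atTop fun t => |a t| := by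
    obtain ⟨B, hB⟩ := hb_abs.bddAbove_range
    refine isBoundedUnder_of_eventually_le (a := 1 + B) ?_
    filter_upwards [eventually_ge_atTop 1] with t ht
    obtain ⟨s, rfl⟩ := Nat.exists_eq_add_of_le' ht
    exact (habs_le s).trans (add_le_add (Real.tanh_lt_one _).le (hB ⟨s, rfl⟩))
  exact (tendsto_zero_iff_abs_tendsto_zero a).2 <|
    tendsto_zero_of_le_add_of_lt_self strictMono_tanh.monotone continuous_tanh
      (fun _ => tanh_lt_self) (fun _ => abs_nonneg _) ha_bdd habs_le hb_abs

/-- `IsCFNTrajectory θ η u h` says that `h` is a sequence of hidden states of a single CFN layer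
with forget gates `θ` and input gates `η`, driven by the sequence `u` of already embedded inputs
(`u t = W x_t`). The initial state `h 0` is free: the recurrence is imposed from time `1` on. -/
def IsCFNTrajectory {ι : Type*} (θ η u h : ℕ → ι → ℝ) : Prop :=
  ∀ t, 1 ≤ t → ∀ i,
    h t i = θ t i * Real.tanh (h (t - 1) i) + η t i * Real.tanh (u t i)

theorem IsCFNTrajectory.tendsto_zero {ι : Type*} {θ η u h : ℕ → ι → ℝ} {C : ℝ}
    (hh : IsCFNTrajectory θ η u h) (hθ : ∀ t i, |θ t i| ≤ 1) (hη : ∀ t i, |η t i| ≤ C)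
    (hu : Tendsto u atTop (𝓝 0)) : Tendsto h atTop (𝓝 0) := by
  refine tendsto_pi_nhds.2 fun i => ?_
  have htanh : Tendsto (fun t => Real.tanh (u t i)) atTop (𝓝 0) := by
    simpa only [Pi.zero_apply, Real.tanh_zero, Function.comp_def] using
      (continuous_tanh.tendsto _).comp (tendsto_pi_nhds.1 hu i)
  have hinput : Tendsto (fun t => η t i * Real.tanh (u t i)) atTop (𝓝 0) :=
    isBoundedUnder_le_mul_tendsto_zero (isBoundedUnder_of ⟨C, fun t => hη t i⟩) htanh
  exact tendsto_zero_of_eq_mul_tanh_add (fun t => hθ (t + 1) i)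
    (fun t => hh (t + 1) t.succ_pos i) (hinput.comp (tendsto_add_atTop_nat 1))

theorem multilayer_cfn_converges_to_zero_general {L : ℕ} {ι : ℕ → Type*} [∀ ℓ, Fintype (ι ℓ)]
    {W : (ℓ : ℕ) → Matrix (ι ℓ) (ι (ℓ - 1)) ℝ} {x : ℕ → ι 0 → ℝ}
    {h θ η : (ℓ : ℕ) → ℕ → ι ℓ → ℝ} {C : ℝ}
    (hθ : ∀ ℓ, 1 ≤ ℓ → ℓ ≤ L → ∀ t i, |θ ℓ t i| ≤ 1)
    (hη : ∀ ℓ, 1 ≤ ℓ → ℓ ≤ L → ∀ t i, |η ℓ t i| ≤ C)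
    (hrec1 : IsCFNTrajectory (θ 1) (η 1) (fun t => (W 1).mulVec (x t)) (h 1))
    (hrec : ∀ ℓ, 2 ≤ ℓ → ℓ ≤ L →
      IsCFNTrajectory (θ ℓ) (η ℓ) (fun t => (W ℓ).mulVec (h (ℓ - 1) t)) (h ℓ))
    (hx : Tendsto (fun t => (W 1).mulVec (x t)) atTop (𝓝 0)) :
    ∀ ℓ, 1 ≤ ℓ → ℓ ≤ L → Tendsto (h ℓ) atTop (𝓝 0) := by
  intro ℓ hℓ
  induction ℓ, hℓ using Nat.le_induction with
  | base => exact fun hL => hrec1.tendsto_zero (hθ 1 le_rfl hL) (hη 1 le_rfl hL) hx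
  | succ ℓ hℓ ih =>
    intro hL
    have hinput : Tendsto (fun t => (W (ℓ + 1)).mulVec (h ℓ t)) atTop (𝓝 0) := by
      have hW : Continuous fun v => (W (ℓ + 1)).mulVec v :=
        continuous_const.matrix_mulVec continuous_id
      simpa only [Matrix.mulVec_zero, Function.comp_def] using (hW.tendsto 0).comp (ih (by omega))
    exact (hrec (ℓ + 1) (by omega) hL).tendsto_zero (hθ (ℓ + 1) (by omega) hL)
      (hη (ℓ + 1) (by omega) hL) hinput

/-- Multi-layer version of Lemma 2 of the paper: for an `L`-layer CFN whose
gate values all lie in `[0, Θ]` with `0 < Θ < 1`, if the embedded inputs vanish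
after time `T` (`W⁽¹⁾ x_t = 0` for `t > T`), then the hidden state of every
layer `1 ≤ ℓ ≤ L` converges to zero as `t → ∞`. -/
theorem multilayer_cfn_converges_to_zero (L : ℕ) (hL : 0 < L) (n : ℕ → ℕ)
    (W : (ℓ : ℕ) → Matrix (Fin (n ℓ)) (Fin (n (ℓ - 1))) ℝ)
    (x : ℕ → Fin (n 0) → ℝ)
    (h θ η : (ℓ : ℕ) → ℕ → Fin (n ℓ) → ℝ)
    (Θ : ℝ) (hΘ0 : 0 < Θ) (hΘ1 : Θ < 1)
    (hgate : ∀ ℓ, 1 ≤ ℓ → ℓ ≤ L → ∀ t i,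
      (0 ≤ θ ℓ t i ∧ θ ℓ t i ≤ Θ) ∧ (0 ≤ η ℓ t i ∧ η ℓ t i ≤ Θ))
    (hrec1 : ∀ t, 1 ≤ t → ∀ i,
      h 1 t i = θ 1 t i * Real.tanh (h 1 (t - 1) i)
        + η 1 t i * Real.tanh ((W 1).mulVec (x t) i))
    (hrec : ∀ ℓ, 2 ≤ ℓ → ℓ ≤ L → ∀ t, 1 ≤ t → ∀ i,
      h ℓ t i = θ ℓ t i * Real.tanh (h ℓ (t - 1) i)
        + η ℓ t i * Real.tanh ((W ℓ).mulVec (h (ℓ - 1) t) i))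
    (T : ℕ) (hx : ∀ t, T < t → (W 1).mulVec (x t) = 0) :
    ∀ ℓ, 1 ≤ ℓ → ℓ ≤ L →
      Filter.Tendsto (fun t => h ℓ t) Filter.atTop (nhds 0) :=
  multilayer_cfn_converges_to_zero_general
    (fun ℓ h1 hL t i => (abs_of_nonneg (hgate ℓ h1 hL t i).1.1).trans_le
      ((hgate ℓ h1 hL t i).1.2.trans hΘ1.le))
    (fun ℓ h1 hL t i => (abs_of_nonneg (hgate ℓ h1 hL t i).2.1).trans_le (hgate ℓ h1 hL t i).2.2)
    hrec1 hrec (tendsto_nhds_of_eventually_eq ((eventually_gt_atTop T).mono hx))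
end
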